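/- Under these hypotheses, G has no critical points off the real axis: if z ∈ Ω \ E and Im z ≠ 0, then the derivative of G at z is nonzero. -/

import Mathlib

open Metric Set Complex

/-- A real-valued function is harmonic on an open subset of `ℂ ≅ ℝ²` if it is
C² there and its Laplacian vanishes. -/
def IsHarmonicOn (G : ℂ → ℝ) (U : Set ℂ) : Prop :=
  ContDiffOn ℝ 2 G U ∧ ∀ z ∈ U,
    fderiv ℝ (fun w => fderiv ℝ G w 1) z 1 +
      fderiv ℝ (fun w => fderiv ℝ G w Complex.I) z Complex.I = 0


open Filter Topology InnerProductSpace

/-- `u` is near `z` the real part of a holomorphic function. -/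
def LocRe (u : ℂ → ℝ) (z : ℂ) : Prop :=
  ∃ F : ℂ → ℂ, AnalyticAt ℂ F z ∧ ∀ᶠ w in 𝓝 z, u w = (F w).re

lemma harmonicOnNhd_of_isHarmonicOn {G : ℂ → ℝ} {U : Set ℂ} (hU : IsOpen U)
    (h : IsHarmonicOn G U) : HarmonicOnNhd G U := by
  intro x hx
  refine ⟨h.1.contDiffAt (hU.mem_nhds hx), ?_⟩
  filter_upwards [hU.mem_nhds hx] with z hz
  have h2 := h.2 z hz
  have hc : ContDiffAt ℝ 2 G z := h.1.contDiffAt (hU.mem_nhds hz)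
  have hd : DifferentiableAt ℝ (fderiv ℝ G) z :=
    (hc.fderiv_right (m := 1) (by norm_num)).differentiableAt (by norm_num)
  rw [fderiv_clm_apply hd (by fun_prop), fderiv_clm_apply hd (by fun_prop)] at h2
  simp only [laplacian_eq_iteratedFDeriv_complexPlane, iteratedFDeriv_two_apply]
  simpa using h2

lemma locRe_of_harmonicOnNhd {G : ℂ → ℝ} {U : Set ℂ} (hU : IsOpen U)
    (h : HarmonicOnNhd G U) {z : ℂ} (hz : z ∈ U) : LocRe G z := by
  obtain ⟨R, hR, hb⟩ := Metric.isOpen_iff.1 hU z hz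
  obtain ⟨F, hF, he⟩ := (h.mono hb).exists_analyticOnNhd_ball_re_eq
  refine ⟨F, hF z (mem_ball_self hR), ?_⟩
  filter_upwards [ball_mem_nhds z hR] with w hw
  exact (he hw).symm

lemma LocRe.neg {u : ℂ → ℝ} {z : ℂ} (h : LocRe u z) : LocRe (fun w => - u w) z := by
  obtain ⟨F, hF, he⟩ := h
  refine ⟨fun w => - F w, hF.neg, ?_⟩
  filter_upwards [he] with w hw
  simp [hw]

lemma LocRe.sub {u v : ℂ → ℝ} {z : ℂ} (h : LocRe u z) (h' : LocRe v z) :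
    LocRe (fun w => u w - v w) z := by
  obtain ⟨F, hF, he⟩ := h
  obtain ⟨F', hF', he'⟩ := h'
  refine ⟨fun w => F w - F' w, hF.sub hF', ?_⟩
  filter_upwards [he, he'] with w hw hw'
  simp [hw, hw']

lemma LocRe.comp_conj {u : ℂ → ℝ} {z : ℂ} (h : LocRe u ((starRingEnd ℂ) z)) :
    LocRe (fun w => u ((starRingEnd ℂ) w)) z := by
  obtain ⟨F, hF, he⟩ := h
  have hc : Tendsto (starRingEnd ℂ) (𝓝 z) (𝓝 ((starRingEnd ℂ) z)) :=
    Complex.continuous_conj.tendsto z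
  refine ⟨(starRingEnd ℂ) ∘ F ∘ (starRingEnd ℂ), ?_, ?_⟩
  · rw [Complex.analyticAt_iff_eventually_differentiableAt] at hF ⊢
    filter_upwards [hc.eventually hF] with w hw
    exact differentiableAt_conj_conj_iff.2 hw
  · filter_upwards [hc.eventually he] with w hw
    simp [hw]

lemma LocRe.eventually_eq_of_isLocalMax {u : ℂ → ℝ} {z : ℂ} (h : LocRe u z)
    (hm : ∀ᶠ w in 𝓝 z, u w ≤ u z) : ∀ᶠ w in 𝓝 z, u w = u z := by
  obtain ⟨F, hF, he⟩ := h
  have hz := he.self_of_nhds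
  have hd : ∀ᶠ w in 𝓝 z, DifferentiableAt ℂ (fun w => Complex.exp (F w)) w := by
    filter_upwards [Complex.analyticAt_iff_eventually_differentiableAt.1 hF] with w hw
    exact hw.cexp
  have := Complex.eventually_eq_of_isLocalMax_norm hd (by
    filter_upwards [he, hm] with w hw hw'
    simp only [Function.comp, Complex.norm_exp]
    rw [← hw, ← hz]
    exact Real.exp_le_exp.2 hw')
  filter_upwards [this, he] with w hw hw'
  have := congrArg norm hw
  simp only [Complex.norm_exp] at this
  rw [hw', hz]
  exact Real.exp_injective this

lemma weak_max {u : ℂ → ℝ} {W : Set ℂ} (hW : IsOpen W) (hb : Bornology.IsBounded W)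
    (hc : ContinuousOn u (closure W)) (hu : ∀ z ∈ W, LocRe u z) {c : ℝ}
    (hf : ∀ z ∈ frontier W, u z ≤ c) : ∀ z ∈ W, u z ≤ c := by
  intro z hz
  by_contra! hlt
  have hcpt : IsCompact (closure W) := hb.isCompact_closure
  obtain ⟨x, hx, hmax⟩ := hcpt.exists_isMaxOn ⟨z, subset_closure hz⟩ hc
  have hxc : c < u x := hlt.trans_le (hmax (subset_closure hz))
  have hA : IsCompact {y ∈ closure W | u y = u x} := by
    have : {y ∈ closure W | u y = u x} = closure W ∩ u ⁻¹' {u x} := by ext; simp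
    rw [this]
    exact hcpt.of_isClosed_subset (hc.preimage_isClosed_of_isClosed isClosed_closure
      isClosed_singleton) inter_subset_left
  obtain ⟨y, ⟨hy, hyx⟩, hymax⟩ := hA.exists_isMaxOn ⟨x, hx, rfl⟩
    Complex.continuous_re.continuousOn
  have hyW : y ∈ W := by
    by_contra hn
    have : y ∈ frontier W := ⟨hy, by rwa [hW.interior_eq]⟩
    linarith [hf y this]
  have hev : ∀ᶠ w in 𝓝 y, u w = u y := by
    apply (hu y hyW).eventually_eq_of_isLocalMax
    filter_upwards [hW.mem_nhds hyW] with w hw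
    rw [hyx]; exact hmax (subset_closure hw)
  obtain ⟨ε, hε, hball⟩ := Metric.eventually_nhds_iff.1 (hev.and (hW.mem_nhds hyW))
  have h1 := @hball (y + (ε / 2 : ℝ)) (by simp [abs_of_pos hε]; linarith)
  have h2 := hymax (show y + (ε / 2 : ℝ) ∈ {y ∈ closure W | u y = u x} from
    ⟨subset_closure h1.2, h1.1.trans hyx⟩)
  simp at h2
  linarith

lemma mem_component_of_closure {U : Set ℂ} {z x : ℂ} (hz : z ∈ U)
    (hx : x ∈ closure (connectedComponentIn U z)) (hxU : x ∈ U) :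
    x ∈ connectedComponentIn U z := by
  have h1 : IsPreconnected (insert x (connectedComponentIn U z)) :=
    isPreconnected_connectedComponentIn.subset_closure (subset_insert _ _)
      (insert_subset hx subset_closure)
  exact h1.subset_connectedComponentIn (mem_insert_of_mem _ (mem_connectedComponentIn hz))
    (insert_subset hxU (connectedComponentIn_subset _ _)) (mem_insert _ _)

lemma eq_of_exp_eq {X : Type*} [TopologicalSpace X] {M : Set X} (hM : IsPreconnected M)
    {f : X → ℂ} (hf : ContinuousOn f M) (h : ∀ x ∈ M, ∀ y ∈ M, Complex.exp (f x) = Complex.exp (f y))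
    {a b : X} (ha : a ∈ M) (hb : b ∈ M) : f a = f b := by
  have key : ∀ x ∈ M, ∃ n : ℤ, f x = f a + n * (2 * Real.pi * I) := fun x hx =>
    Complex.exp_eq_exp_iff_exists_int.1 (h x hx a ha)
  obtain ⟨n, hn⟩ := key b hb
  have hg : ContinuousOn (fun x => ((f x).im - (f a).im) / (2 * Real.pi)) M :=
    ((Complex.continuous_im.comp_continuousOn hf).sub continuousOn_const).div_const _
  have hpi := Real.pi_pos
  have hval : ∀ x ∈ M, ∃ n : ℤ, ((f x).im - (f a).im) / (2 * Real.pi) = n ∧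
      f x = f a + n * (2 * Real.pi * I) := by
    intro x hx
    obtain ⟨n, hn⟩ := key x hx
    refine ⟨n, ?_, hn⟩
    rw [hn]; simp
  have hoc := (hM.image _ hg).ordConnected
  obtain ⟨n, hn, hn'⟩ := hval b hb
  have hmb : (n : ℝ) ∈ (fun x => ((f x).im - (f a).im) / (2 * Real.pi)) '' M := ⟨b, hb, hn⟩
  have hma : (0 : ℝ) ∈ (fun x => ((f x).im - (f a).im) / (2 * Real.pi)) '' M := ⟨a, ha, by simp⟩
  rcases lt_trichotomy n 0 with h0 | h0 | h0
  · have h0' : (n : ℝ) ≤ -1 := by exact_mod_cast Int.le_sub_one_of_lt h0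
    obtain ⟨x, hx, hx'⟩ := hoc.out hmb hma (show (-(1/2) : ℝ) ∈ Icc (n:ℝ) 0 by constructor <;> linarith)
    obtain ⟨k, hk, -⟩ := hval x hx
    simp only at hx'
    rw [hx'] at hk
    have h3 : (-1 : ℝ) = ((2 * k : ℤ) : ℝ) := by push_cast; linarith
    have h4 : (-1 : ℤ) = 2 * k := by exact_mod_cast h3
    omega
  · rw [hn', h0]; simp
  · have h0' : (1 : ℝ) ≤ n := by exact_mod_cast h0
    obtain ⟨x, hx, hx'⟩ := hoc.out hma hmb (show ((1/2) : ℝ) ∈ Icc 0 (n:ℝ) by constructor <;> linarith)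
    obtain ⟨k, hk, -⟩ := hval x hx
    simp only at hx'
    rw [hx'] at hk
    have h3 : (1 : ℝ) = ((2 * k : ℤ) : ℝ) := by push_cast; linarith
    have h4 : (1 : ℤ) = 2 * k := by exact_mod_cast h3
    omega

lemma add_real_mem_slitPlane {v : ℂ} (hv : ‖v‖ = 1) (hv1 : v ≠ -1) {s t : ℝ} (hs : 0 ≤ s)
    (ht : 0 ≤ t) (hst : 0 < s + t) : (t : ℂ) * v + s ∈ slitPlane := by
  rw [mem_slitPlane_iff]
  by_cases h : v.im = 0
  · left
    have : v = (v.re : ℂ) := by apply Complex.ext <;> simp [h]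
    have h2 : |v.re| = 1 := by rw [← hv]; conv_rhs => rw [this]
                               simp
    rcases abs_eq (zero_le_one) |>.1 h2 with h3 | h3
    · simp [h3]; linarith
    · exact absurd (by rw [this, h3]; simp) hv1
  · rcases ht.eq_or_lt with h0 | h0
    · left; simp [← h0]; linarith
    · right; simp [h, h0.ne']

lemma one_sub_mem_slitPlane {w : ℂ} (hw : ‖w‖ < 1) : 1 - w ∈ slitPlane := by
  left
  have := (Complex.abs_re_le_norm w).trans_lt hw
  simp
  linarith [abs_lt.1 this]

lemma log_add_real {v : ℂ} (hv : ‖v‖ = 1) (hv1 : v ≠ -1) {s : ℝ} (hs : 0 ≤ s) (hs1 : s < 1) :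
    Complex.log (v + s) = Complex.log v + Complex.log (1 - (-s / v)) := by
  have hv0 : v ≠ 0 := by rintro rfl; simp at hv
  have m1 : ∀ x ∈ Icc 0 s, v + (x : ℂ) ∈ slitPlane := fun x hx => by
    simpa using add_real_mem_slitPlane hv hv1 hx.1 zero_le_one (by linarith [hx.1])
  have m2 : ∀ x ∈ Icc 0 s, 1 - (-(x : ℂ) / v) ∈ slitPlane := fun x hx => by
    apply one_sub_mem_slitPlane
    simp [hv, abs_of_nonneg hx.1]; linarith [hx.2]
  have hc : ContinuousOn (fun x : ℝ => Complex.log (v + x) - Complex.log v -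
      Complex.log (1 - (-x / v))) (Icc 0 s) := by
    apply ContinuousOn.sub
    · apply ContinuousOn.sub _ continuousOn_const
      exact ContinuousOn.clog (by fun_prop) m1
    · exact ContinuousOn.clog (by fun_prop) m2
  have he : ∀ x ∈ Icc 0 s, Complex.exp (Complex.log (v + x) - Complex.log v -
      Complex.log (1 - (-x / v))) = 1 := by
    intro x hx
    have n1 := slitPlane_ne_zero (m1 x hx)
    have n2 := slitPlane_ne_zero (m2 x hx)
    rw [Complex.exp_sub, Complex.exp_sub, Complex.exp_log n1, Complex.exp_log n2,
      Complex.exp_log hv0]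
    have : v + x = v * (1 - (-x / v)) := by field_simp; ring
    rw [div_div, ← this, div_self n1]
  have := eq_of_exp_eq isPreconnected_Icc hc (fun x hx y hy => by rw [he x hx, he y hy])
    (show (0:ℝ) ∈ Icc 0 s from ⟨le_rfl, hs⟩) (show s ∈ Icc 0 s from ⟨hs, le_rfl⟩)
  simp at this
  linear_combination -this

/-- The continuous logarithm of `z - p` on `K` determines the variation of the
logarithm of `z - z₀` along `M`. -/
lemma winding {z0 u0 u1 u3 : ℂ} {K M : Set ℂ} {r ρ : ℝ} (h0 : ‖u0‖ = 1) (h1 : ‖u1‖ = 1)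
    (h3 : ‖u3‖ = 1) (h10 : u1 ≠ u0) (h30 : u3 ≠ u0) (hr : 0 < r) (hρ : 0 < ρ)
    (hMK : M ⊆ K) (hMρ : ∀ z ∈ M, ρ < ‖z - z0‖)
    (ha1 : ∀ t ∈ Icc 0 r, z0 + (t : ℂ) * u1 ∈ K) (ha3 : ∀ t ∈ Icc 0 r, z0 + (t : ℂ) * u3 ∈ K)
    (hM1 : z0 + (r : ℂ) * u1 ∈ M)
    {l : ℂ → ℂ} (hl : ContinuousOn l K)
    (hle : ∀ z ∈ K, Complex.exp (l z) = z - (z0 + ρ * u0)) :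
    ∃ m : ℂ → ℂ, ContinuousOn m M ∧ (∀ z ∈ M, Complex.exp (m z) = z - z0) ∧
      m (z0 + r * u3) - m (z0 + r * u1) = Complex.log (-u3 / u0) - Complex.log (-u1 / u0) := by
  have hu0 : u0 ≠ 0 := by rintro rfl; simp at h0
  have hρr : ρ < r := by
    have := hMρ _ hM1
    simpa [h1, abs_of_pos hr] using this
  have hsm : ∀ z ∈ M, 1 - ρ * u0 / (z - z0) ∈ slitPlane := by
    intro z hz
    have h := hMρ z hz
    apply one_sub_mem_slitPlane
    simp [h0, abs_of_pos hρ]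
    rw [div_lt_one (hρ.trans h)]; exact h
  have hz0 : ∀ z ∈ M, z - z0 ≠ 0 := fun z hz => by
    rw [← norm_pos_iff]; exact hρ.trans (hMρ z hz)
  have arm : ∀ u : ℂ, ‖u‖ = 1 → u ≠ u0 → (∀ t ∈ Icc 0 r, z0 + (t : ℂ) * u ∈ K) →
      l (z0 + r * u) - Complex.log (1 - ρ * u0 / (z0 + r * u - z0)) =
        l z0 - Complex.log ρ + Complex.log r + Complex.log (-u / u0) := by
    intro u hu hne ha
    have hun : u ≠ 0 := by rintro rfl; simp at hu
    have hv : ‖-u / u0‖ = 1 := by simp [hu, h0]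
    have hv1 : -u / u0 ≠ -1 := by
      intro h
      rw [neg_div, neg_inj, div_eq_one_iff_eq hu0] at h
      exact hne h
    have hsl : ∀ t ∈ Icc 0 r, (t : ℂ) * (-u / u0) + ρ ∈ slitPlane := fun t ht =>
      add_real_mem_slitPlane hv hv1 hρ.le ht.1 (by linarith [ht.1])
    have hc : ContinuousOn (fun t : ℝ => l (z0 + t * u) - Complex.log (t * (-u / u0) + ρ))
        (Icc 0 r) := by
      apply ContinuousOn.sub
      · exact hl.comp (by fun_prop) ha
      · exact ContinuousOn.clog (by fun_prop) hsl
    have he : ∀ t ∈ Icc 0 r,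
        Complex.exp (l (z0 + t * u) - Complex.log (t * (-u / u0) + ρ)) = -u0 := by
      intro t ht
      have hn := slitPlane_ne_zero (hsl t ht)
      rw [Complex.exp_sub, hle _ (ha t ht), Complex.exp_log hn, div_eq_iff hn]
      field_simp; ring
    have := eq_of_exp_eq isPreconnected_Icc hc (fun x hx y hy => by rw [he x hx, he y hy])
      (show (0:ℝ) ∈ Icc 0 r from ⟨le_rfl, hr.le⟩) (show r ∈ Icc 0 r from ⟨hr.le, le_rfl⟩)
    simp only [ofReal_zero, zero_mul, add_zero, zero_add] at this
    have hs := log_add_real hv hv1 (s := ρ / r) (by positivity) (by rwa [div_lt_one hr])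
    have hrC : (r : ℂ) ≠ 0 := by exact_mod_cast hr.ne'
    have e1 : (r : ℂ) * (-u / u0) + ρ = (r : ℂ) * (-u / u0 + (ρ / r : ℝ)) := by
      push_cast; field_simp
    have hne : -u / u0 + ((ρ / r : ℝ) : ℂ) ≠ 0 := by
      intro h
      exact slitPlane_ne_zero (hsl r ⟨hr.le, le_rfl⟩) (by rw [e1, h, mul_zero])
    rw [e1, Complex.log_ofReal_mul hr hne, hs, Complex.ofReal_log hr.le] at this
    have e2 : (1 : ℂ) - ρ * u0 / (z0 + r * u - z0) = 1 - (-((ρ / r : ℝ) : ℂ) / (-u / u0)) := by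
      push_cast
      rw [add_sub_cancel_left]
      field_simp
    rw [e2]
    linear_combination -this
  refine ⟨fun z => l z - Complex.log (1 - ρ * u0 / (z - z0)), ?_, ?_, ?_⟩
  · apply (hl.mono hMK).sub
    apply ContinuousOn.clog _ hsm
    exact continuousOn_const.sub (continuousOn_const.div (by fun_prop) hz0)
  · intro z hz
    have := hz0 z hz
    have hn := slitPlane_ne_zero (hsm z hz)
    simp only
    rw [Complex.exp_sub, hle z (hMK hz), Complex.exp_log hn, div_eq_iff hn]
    field_simp; ring
  · simp only
    rw [arm u3 h3 h30 ha3, arm u1 h1 h10 ha1]; ring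

lemma log_neg_exp {θ : ℝ} (h1 : 0 < θ) (h2 : θ < 2 * Real.pi) :
    Complex.log (-Complex.exp (θ * I)) = ((θ - Real.pi : ℝ) : ℂ) * I := by
  have : -Complex.exp (θ * I) = Complex.exp (((θ - Real.pi : ℝ) : ℂ) * I) := by
    push_cast
    rw [sub_mul, Complex.exp_sub, Complex.exp_pi_mul_I]; ring
  rw [this, Complex.log_exp] <;> simp <;> linarith

lemma no_cross {z0 ω : ℂ} {α : ℝ} (hω : ‖ω‖ = 1) (hα : 0 < α) (hα2 : α ≤ Real.pi / 2)
    {K M : Set ℂ} {r ρ : ℝ} (hr : 0 < r) (hρ : 0 < ρ) (hM : IsPreconnected M)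
    (hMK : M ⊆ K) (hMρ : ∀ z ∈ M, ρ < ‖z - z0‖)
    (ha1 : ∀ t ∈ Icc 0 r, z0 + (t : ℂ) * (ω * Complex.exp (α * I)) ∈ K)
    (ha3 : ∀ t ∈ Icc 0 r, z0 + (t : ℂ) * (ω * Complex.exp ((3 * α : ℝ) * I)) ∈ K)
    (hM1 : z0 + (r : ℂ) * (ω * Complex.exp (α * I)) ∈ M)
    (hM3 : z0 + (r : ℂ) * (ω * Complex.exp ((3 * α : ℝ) * I)) ∈ M)
    (hp : ∃ l : ℂ → ℂ, ContinuousOn l K ∧ ∀ z ∈ K, Complex.exp (l z) = z - (z0 + ρ * ω))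
    (hq : ∃ l : ℂ → ℂ, ContinuousOn l K ∧ ∀ z ∈ K, Complex.exp (l z) =
      z - (z0 + ρ * (ω * Complex.exp ((2 * α : ℝ) * I)))) : False := by
  have hpi := Real.pi_pos
  have hω0 : ω ≠ 0 := by rintro rfl; simp at hω
  have hn : ∀ θ : ℝ, ‖ω * Complex.exp (θ * I)‖ = 1 := fun θ => by
    rw [norm_mul, hω, Complex.norm_exp_ofReal_mul_I, mul_one]
  have hne1 : ∀ θ : ℝ, 0 < θ → θ < 2 * Real.pi → Complex.exp (θ * I) ≠ 1 := by
    intro θ h1 h2 h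
    have h3 := log_neg_exp h1 h2
    rw [h, Complex.log_neg_one] at h3
    have := congrArg Complex.im h3
    simp at this
    linarith
  have e3 : Complex.exp ((3 * α : ℝ) * I) = Complex.exp ((2 * α : ℝ) * I) * Complex.exp (α * I) := by
    rw [← Complex.exp_add]; congr 1; push_cast; ring
  have e2 : Complex.exp ((2 * α : ℝ) * I) = Complex.exp (α * I) * Complex.exp (α * I) := by
    rw [← Complex.exp_add]; congr 1; push_cast; ring
  have eα := Complex.exp_ne_zero (α * I)
  have e2α := Complex.exp_ne_zero ((2 * α : ℝ) * I)
  have g1 : Complex.exp (α * I) ≠ 1 := hne1 α hα (by linarith)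
  have g3 : Complex.exp ((3 * α : ℝ) * I) ≠ 1 := hne1 _ (by linarith) (by linarith)
  obtain ⟨l, hl, hle⟩ := hp
  obtain ⟨l', hl', hle'⟩ := hq
  obtain ⟨m, hm, hme, hmd⟩ := winding hω (hn α) (hn (3 * α)) (by simpa [hω0] using g1)
    (by simpa [hω0] using g3) hr hρ hMK hMρ ha1 ha3 hM1 hl hle
  obtain ⟨m', hm', hme', hmd'⟩ := winding (hn (2 * α)) (hn α) (hn (3 * α))
    (by
      rw [e2]; intro h
      have := mul_left_cancel₀ hω0 h
      rw [left_eq_mul₀ eα] at this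
      exact g1 this)
    (by
      rw [e3]; intro h
      have := mul_left_cancel₀ hω0 h
      rw [mul_eq_left₀ e2α] at this
      exact g1 this) hr hρ hMK hMρ ha1 ha3 hM1 hl' hle'
  have heq := eq_of_exp_eq hM (hm.sub hm') (fun x hx y hy => by
    have : ∀ w ∈ M, Complex.exp (m w - m' w) = 1 := by
      intro w hw
      have : w - z0 ≠ 0 := by
        rw [← norm_pos_iff]; exact hρ.trans (hMρ w hw)
      rw [Complex.exp_sub, hme w hw, hme' w hw, div_self this]
    simp only [Pi.sub_apply]
    rw [this x hx, this y hy]) hM1 hM3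
  simp only [Pi.sub_apply] at heq
  have k1 : -(ω * Complex.exp ((3 * α : ℝ) * I)) / ω = - Complex.exp ((3 * α : ℝ) * I) := by
    field_simp
  have k2 : -(ω * Complex.exp (α * I)) / ω = - Complex.exp (α * I) := by
    field_simp
  have k3 : -(ω * Complex.exp ((3 * α : ℝ) * I)) / (ω * Complex.exp ((2 * α : ℝ) * I)) =
      - Complex.exp (α * I) := by
    rw [e3]; field_simp
  have k4 : -(ω * Complex.exp (α * I)) / (ω * Complex.exp ((2 * α : ℝ) * I)) =
      - Complex.exp ((2 * Real.pi - α : ℝ) * I) := by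
    rw [e2]
    have : ((2 * Real.pi - α : ℝ) * I : ℂ) = 2 * Real.pi * I - α * I := by push_cast; ring
    rw [this, Complex.exp_sub, Complex.exp_two_pi_mul_I]
    field_simp
  rw [k1, k2, log_neg_exp (by linarith) (by linarith), log_neg_exp hα (by linarith)] at hmd
  rw [k3, k4, log_neg_exp hα (by linarith), log_neg_exp (by linarith) (by linarith)] at hmd'
  have : ((3 * α - Real.pi : ℝ) : ℂ) * I - ((α - Real.pi : ℝ) : ℂ) * I -
    (((α - Real.pi : ℝ) : ℂ) * I - ((2 * Real.pi - α - Real.pi : ℝ) : ℂ) * I) = 0 := by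
    rw [← hmd, ← hmd']
    linear_combination -heq
  have := congrArg Complex.im this
  simp at this
  linarith

lemma arm_pos {F : ℂ → ℂ} {g : ℂ → ℂ} {z0 : ℂ} {k : ℕ} (hg : ContinuousAt g z0)
    (hF : ∀ᶠ z in 𝓝 z0, F z - F z0 = (z - z0) ^ k * g z) {u : ℂ} :
    (0 < (u ^ k * g z0).re → ∀ᶠ t : ℝ in 𝓝[>] 0, (F z0).re < (F (z0 + t * u)).re) ∧
    ((u ^ k * g z0).re < 0 → ∀ᶠ t : ℝ in 𝓝[>] 0, (F (z0 + t * u)).re < (F z0).re) := by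
  have hc : Tendsto (fun t : ℝ => z0 + t * u) (𝓝[>] 0) (𝓝 z0) := by
    have : ContinuousAt (fun t : ℝ => z0 + t * u) 0 := by fun_prop
    have h := this.tendsto
    simp at h
    exact h.mono_left nhdsWithin_le_nhds
  have hc2 : Tendsto (fun t : ℝ => (u ^ k * g (z0 + t * u)).re) (𝓝[>] 0)
      (𝓝 (u ^ k * g z0).re) :=
    (Complex.continuous_re.tendsto _).comp ((hg.tendsto.comp hc).const_mul _)
  have hF' := hc.eventually hF
  have key : ∀ t : ℝ, F (z0 + t * u) - F z0 = (z0 + t * u - z0) ^ k * g (z0 + t * u) →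
      (F (z0 + t * u)).re - (F z0).re = t ^ k * (u ^ k * g (z0 + t * u)).re := by
    intro t ht
    rw [← Complex.sub_re, ht, add_sub_cancel_left, mul_pow, mul_assoc, ← Complex.ofReal_pow,
      Complex.re_ofReal_mul]
  constructor
  · intro h
    filter_upwards [hF', hc2.eventually (lt_mem_nhds h), self_mem_nhdsWithin] with t h1 h2 h3
    have := key t h1
    have : 0 < t ^ k * (u ^ k * g (z0 + t * u)).re := mul_pos (pow_pos h3 k) h2
    linarith
  · intro h
    filter_upwards [hF', hc2.eventually (gt_mem_nhds h), self_mem_nhdsWithin] with t h1 h2 h3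
    have := key t h1
    have : t ^ k * (u ^ k * g (z0 + t * u)).re < 0 := mul_neg_of_pos_of_neg (pow_pos h3 k) h2
    linarith

lemma exists_arms {G : ℂ → ℝ} {z0 : ℂ} (hG : LocRe G z0) (hd : fderiv ℝ G z0 = 0)
    (hnc : ¬ ∀ᶠ z in 𝓝 z0, G z = G z0) :
    ∃ ω : ℂ, ∃ α : ℝ, ‖ω‖ = 1 ∧ 0 < α ∧ α ≤ Real.pi / 2 ∧ ∀ᶠ t : ℝ in 𝓝[>] 0,
      G z0 < G (z0 + t * ω) ∧ G (z0 + t * (ω * Complex.exp (α * I))) < G z0 ∧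
      G z0 < G (z0 + t * (ω * Complex.exp ((2 * α : ℝ) * I))) ∧
      G (z0 + t * (ω * Complex.exp ((3 * α : ℝ) * I))) < G z0 := by
  obtain ⟨F, hF, he⟩ := hG
  have hz := he.self_of_nhds
  have hnc' : ¬ ∀ᶠ z in 𝓝 z0, F z - F z0 = 0 := by
    intro h
    apply hnc
    filter_upwards [h, he] with z h1 h2
    rw [h2, hz, sub_eq_zero.1 h1]
  have hFa : AnalyticAt ℂ (fun z => F z - F z0) z0 := hF.sub analyticAt_const
  obtain ⟨k, g, hg, hg0, hk⟩ := hFa.exists_eventuallyEq_pow_smul_nonzero_iff.2 hnc'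
  simp only [smul_eq_mul] at hk
  have hFd : HasDerivAt F 0 z0 := by
    have h1 := hF.differentiableAt.hasDerivAt
    have h2 : ∀ v : ℂ, (v * deriv F z0).re = 0 := by
      intro v
      have h3 : HasFDerivAt (fun w => (F w).re) _ z0 :=
        reCLM.hasFDerivAt.comp z0 (h1.hasFDerivAt.restrictScalars ℝ)
      have h4 := (h3.congr_of_eventuallyEq he).fderiv
      rw [hd] at h4
      have h5 := congrArg (fun L => L v) h4
      simpa using h5.symm
    have h6 : deriv F z0 = 0 := by
      have e1 := h2 1
      have e2 := h2 I
      apply Complex.ext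
      · simpa using e1
      · simpa using e2
    rwa [h6] at h1
  have hk2 : 2 ≤ k := by
    by_contra! hlt
    interval_cases k
    · have := hk.self_of_nhds
      simp at this
      exact hg0 this.symm
    · have h1 : HasDerivAt (fun z => F z - F z0) 0 z0 := hFd.sub_const _
      have h2 : HasDerivAt (fun z => (z - z0) ^ 1 * g z) (g z0) z0 := by
        have := (((hasDerivAt_id z0).sub_const z0).pow 1).mul hg.differentiableAt.hasDerivAt
        have h5 : g z0 = ((1:ℕ) : ℂ) * (id z0 - z0) ^ (1 - 1) * 1 * g z0 + (id z0 - z0) ^ 1 * deriv g z0 := by simp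
        rw [h5]
        exact this
      exact hg0 ((h2.congr_of_eventuallyEq hk).unique h1)
  have hkC : (k : ℂ) ≠ 0 := by exact_mod_cast (by omega : k ≠ 0)
  have hkR : (0 : ℝ) < k := by exact_mod_cast (by omega : 0 < k)
  set β := Complex.arg (g z0)
  have hβ : g z0 = ‖g z0‖ * Complex.exp (β * I) := (Complex.norm_mul_exp_arg_mul_I _).symm
  have hgp : 0 < ‖g z0‖ := norm_pos_iff.2 hg0
  have hω : (Complex.exp ((-β / k : ℝ) * I)) ^ k * g z0 = ‖g z0‖ := by
    rw [← Complex.exp_nat_mul]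
    conv_lhs => rw [hβ]
    have : (k : ℂ) * ((-β / k : ℝ) * I) = - (β * I) := by push_cast; field_simp
    rw [this, Complex.exp_neg]
    field_simp
  have hj : ∀ j : ℝ, (Complex.exp ((-β / k : ℝ) * I) * Complex.exp ((j * (Real.pi / k) : ℝ) * I)) ^ k * g z0
      = ‖g z0‖ * Complex.exp ((j * Real.pi : ℝ) * I) := by
    intro j
    rw [mul_pow, mul_right_comm, hω, ← Complex.exp_nat_mul]
    congr 2
    push_cast; field_simp
  refine ⟨Complex.exp ((-β / k : ℝ) * I), Real.pi / k, Complex.norm_exp_ofReal_mul_I _,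
    by positivity, ?_, ?_⟩
  · have : (2 : ℝ) ≤ k := by exact_mod_cast hk2
    gcongr
  · have hconv : ∀ u : ℂ, ∀ᶠ t : ℝ in 𝓝[>] 0, G (z0 + t * u) = (F (z0 + t * u)).re := by
      intro u
      have hc : Tendsto (fun t : ℝ => z0 + t * u) (𝓝[>] 0) (𝓝 z0) := by
        have : ContinuousAt (fun t : ℝ => z0 + t * u) 0 := by fun_prop
        have h := this.tendsto
        simp at h
        exact h.mono_left nhdsWithin_le_nhds
      exact hc.eventually he
    have a0 := (arm_pos hg.continuousAt hk (u := Complex.exp ((-β / k : ℝ) * I))).1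
      (by rw [hω]; simpa using hg0)
    have a1 := (arm_pos hg.continuousAt hk (u := Complex.exp ((-β / k : ℝ) * I) *
      Complex.exp ((Real.pi / k : ℝ) * I))).2
      (by
        have := hj 1
        rw [one_mul, one_mul, Complex.exp_pi_mul_I] at this
        rw [this]; simpa using hg0)
    have a2 := (arm_pos hg.continuousAt hk (u := Complex.exp ((-β / k : ℝ) * I) *
      Complex.exp ((2 * (Real.pi / k) : ℝ) * I))).1
      (by
        have := hj 2
        push_cast at this
        rw [Complex.exp_two_pi_mul_I] at this
        push_cast
        rw [this]; simpa using hg0)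
    have a3 := (arm_pos hg.continuousAt hk (u := Complex.exp ((-β / k : ℝ) * I) *
      Complex.exp ((3 * (Real.pi / k) : ℝ) * I))).2
      (by
        have := hj 3
        have e : ((3 * Real.pi : ℝ) : ℂ) * I = 2 * Real.pi * I + Real.pi * I := by push_cast; ring
        rw [e, Complex.exp_add, Complex.exp_two_pi_mul_I, Complex.exp_pi_mul_I] at this
        rw [this]; simpa using hg0)
    filter_upwards [a0, a1, a2, a3, hconv _, hconv _, hconv _, hconv _] with t h0 h1 h2 h3 g0 g1 g2 g3
    rw [g0, g1, g2, g3, hz]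
    exact ⟨h0, h1, h2, h3⟩

lemma log_transfer {K V : Set ℂ} (hK : IsCompact K) (hV : IsPreconnected V) (hVK : Disjoint V K)
    {p p' : ℂ} (hp : p ∈ V) (hp' : p' ∈ closure V) (hp'K : p' ∉ K)
    (h : ∃ l : ℂ → ℂ, ContinuousOn l K ∧ ∀ z ∈ K, Complex.exp (l z) = z - p') :
    ∃ l : ℂ → ℂ, ContinuousOn l K ∧ ∀ z ∈ K, Complex.exp (l z) = z - p := by
  set T : Set ℂ := {q | q ∉ K ∧ ∃ l : ℂ → ℂ, ContinuousOn l K ∧ ∀ z ∈ K, Complex.exp (l z) = z - q}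
  have step : ∀ q q' : ℂ, ∀ ε > 0, ball q ε ⊆ Kᶜ → dist q' q < ε / 2 →
      ((∃ l : ℂ → ℂ, ContinuousOn l K ∧ ∀ z ∈ K, Complex.exp (l z) = z - q) ↔
      ∃ l : ℂ → ℂ, ContinuousOn l K ∧ ∀ z ∈ K, Complex.exp (l z) = z - q') := by
    have main : ∀ q q' : ℂ, (∀ z ∈ K, ‖q' - q‖ < ‖z - q‖) →
      (∃ l : ℂ → ℂ, ContinuousOn l K ∧ ∀ z ∈ K, Complex.exp (l z) = z - q) →
      ∃ l : ℂ → ℂ, ContinuousOn l K ∧ ∀ z ∈ K, Complex.exp (l z) = z - q' := by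
      rintro q q' hlt ⟨l, hl, hle⟩
      have hq : ∀ z ∈ K, z - q ≠ 0 := fun z hz => by
        rw [← norm_pos_iff]; exact (norm_nonneg _).trans_lt (hlt z hz)
      have hsl : ∀ z ∈ K, 1 - (q' - q) / (z - q) ∈ slitPlane := by
        intro z hz
        apply one_sub_mem_slitPlane
        rw [norm_div, div_lt_one (norm_pos_iff.2 (hq z hz))]
        exact hlt z hz
      refine ⟨fun z => l z + Complex.log (1 - (q' - q) / (z - q)), ?_, ?_⟩
      · apply hl.add
        apply ContinuousOn.clog _ hsl
        exact continuousOn_const.sub (continuousOn_const.div (by fun_prop) hq)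
      · intro z hz
        have := hq z hz
        rw [Complex.exp_add, hle z hz, Complex.exp_log (slitPlane_ne_zero (hsl z hz))]
        field_simp; ring
    intro q q' ε hε hb hd
    have hfar : ∀ z ∈ K, ε ≤ ‖z - q‖ := by
      intro z hz
      by_contra! hlt
      exact hb (by rwa [mem_ball, dist_eq_norm]) hz
    rw [dist_eq_norm] at hd
    constructor
    · apply main
      intro z hz
      linarith [hfar z hz]
    · apply main
      intro z hz
      have h1 := hfar z hz
      have h2 : ‖z - q‖ ≤ ‖z - q'‖ + ‖q' - q‖ := norm_sub_le_norm_sub_add_norm_sub _ _ _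
      rw [norm_sub_rev q q']
      linarith
  have hloc : ∀ q ∉ K, ∃ ε > 0, ball q ε ⊆ Kᶜ := fun q hq =>
    Metric.isOpen_iff.1 hK.isClosed.isOpen_compl q hq
  have hTo : IsOpen T := by
    rw [Metric.isOpen_iff]
    rintro q ⟨hqK, hq⟩
    obtain ⟨ε, hε, hb⟩ := hloc q hqK
    refine ⟨ε / 2, by positivity, fun q' hq' => ⟨hb (ball_subset_ball (by linarith) hq'), ?_⟩⟩
    exact (step q q' ε hε hb hq').1 hq
  have hTc : IsOpen (Kᶜ \ T) := by
    rw [Metric.isOpen_iff]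
    rintro q ⟨hqK, hq⟩
    obtain ⟨ε, hε, hb⟩ := hloc q hqK
    refine ⟨ε / 2, by positivity, fun q' hq' => ⟨hb (ball_subset_ball (by linarith) hq'), ?_⟩⟩
    intro hT
    exact hq ⟨hqK, (step q q' ε hε hb hq').2 hT.2⟩
  have hpT : p' ∈ T := ⟨hp'K, h⟩
  obtain ⟨x, hxT, hxV⟩ := mem_closure_iff.1 hp' T hTo hpT
  have hsub : V ⊆ T := by
    apply hV.subset_left_of_subset_union hTo hTc disjoint_sdiff_right _ ⟨x, hxV, hxT⟩
    intro y hy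
    by_cases hyT : y ∈ T
    · exact Or.inl hyT
    · exact Or.inr ⟨disjoint_left.1 hVK hy, hyT⟩
  exact (hsub hp).2

/-- **Theorem 7.2 (i).** The Green-type function `G` has no critical points
off the real axis. -/
theorem green_function_no_critical_points_off_real_axis
    (Ω : Set ℂ) (hΩopen : IsOpen Ω) (hΩbdd : Bornology.IsBounded Ω)
    (hΩsc : SimplyConnectedSpace Ω)
    (hΩconj : (fun z => (starRingEnd ℂ) z) '' Ω = Ω)
    (E : Set ℂ) (hEne : E.Nonempty) (hEcpt : IsCompact E)
    (hEsub : E ⊆ Ω) (hEreal : ∀ z ∈ E, z.im = 0)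
    (G : ℂ → ℝ) (hGcont : ContinuousOn G (closure Ω))
    (hGbdry : ∀ z ∈ frontier Ω, G z = 1)
    (hGzero : ∀ z ∈ E, G z = 0)
    (hGharm : IsHarmonicOn G (Ω \ E)) :
    ∀ z ∈ Ω \ E, z.im ≠ 0 → fderiv ℝ G z ≠ 0 := by
  intro z0 hz0 hz0im hcrit
  set U : Set ℂ := Ω \ E with hU
  have hUo : IsOpen U := hΩopen.sdiff hEcpt.isClosed
  have hUb : Bornology.IsBounded U := hΩbdd.subset sdiff_subset
  have hUcl : closure U ⊆ closure Ω := closure_mono sdiff_subset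
  have hH : HarmonicOnNhd G U := harmonicOnNhd_of_isHarmonicOn hUo hGharm
  have hL : ∀ z ∈ U, LocRe G z := fun z hz => locRe_of_harmonicOnNhd hUo hH hz
  have hcl : ∀ z ∈ closure Ω, z ∈ Ω ∨ z ∈ frontier Ω := by
    intro z hz
    by_cases h : z ∈ Ω
    · exact Or.inl h
    · exact Or.inr ⟨hz, by rwa [hΩopen.interior_eq]⟩
  have hfrΩ : ∀ z ∈ frontier Ω, z ∉ Ω := fun z hz h => by
    have := hz.2
    rw [hΩopen.interior_eq] at this
    exact this h
  have hfr : ∀ z ∈ frontier U, z ∈ frontier Ω ∨ z ∈ E := by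
    intro z hz
    rcases hcl z (hUcl hz.1) with h | h
    · right
      by_contra hE
      have := hz.2
      rw [hUo.interior_eq] at this
      exact this ⟨h, hE⟩
    · exact Or.inl h
  -- symmetry
  have hconj : ∀ z ∈ Ω, (starRingEnd ℂ) z ∈ Ω := fun z hz => by
    rw [← hΩconj]; exact ⟨z, hz, rfl⟩
  have hconj' : ∀ z, (starRingEnd ℂ) z ∈ Ω → z ∈ Ω := fun z hz => by
    simpa using hconj _ hz
  have hconjcl : ∀ z ∈ closure Ω, (starRingEnd ℂ) z ∈ closure Ω := fun z hz =>
    map_mem_closure Complex.continuous_conj hz hconj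
  have hconjfr : ∀ z ∈ frontier Ω, (starRingEnd ℂ) z ∈ frontier Ω := by
    intro z hz
    rcases hcl _ (hconjcl z hz.1) with h | h
    · exact absurd (hconj' z h) (hfrΩ z hz)
    · exact h
  have hconjE : ∀ z ∈ E, (starRingEnd ℂ) z = z := fun z hz =>
    Complex.conj_eq_iff_im.2 (hEreal z hz)
  have hconjU : ∀ z ∈ U, (starRingEnd ℂ) z ∈ U := by
    intro z hz
    refine ⟨hconj z hz.1, fun h => hz.2 ?_⟩
    have := hconjE _ h
    rw [Complex.conj_conj] at this
    rwa [this]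
  have hsymU : ∀ z ∈ U, G z - G ((starRingEnd ℂ) z) ≤ 0 := by
    apply weak_max hUo hUb
    · apply (hGcont.mono hUcl).sub
      exact hGcont.comp Complex.continuous_conj.continuousOn (fun z hz => hconjcl z (hUcl hz))
    · intro z hz
      exact (hL z hz).sub (LocRe.comp_conj (hL _ (hconjU z hz)))
    · intro z hz
      rcases hfr z hz with h | h
      · rw [hGbdry z h, hGbdry _ (hconjfr z h)]; simp
      · rw [hconjE z h]; simp
  have hsym : ∀ z ∈ Ω, G ((starRingEnd ℂ) z) = G z := by
    intro z hz
    by_cases hE : z ∈ E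
    · rw [hconjE z hE]
    · have h1 := hsymU z ⟨hz, hE⟩
      have h2 := hsymU _ (hconjU z ⟨hz, hE⟩)
      rw [Complex.conj_conj] at h2
      linarith
  -- bounds
  have hle1 : ∀ z ∈ U, G z ≤ 1 := by
    apply weak_max hUo hUb (hGcont.mono hUcl) hL
    intro z hz
    rcases hfr z hz with h | h
    · rw [hGbdry z h]
    · rw [hGzero z h]; norm_num
  have hge0 : ∀ z ∈ U, 0 ≤ G z := by
    intro z hz
    have := weak_max hUo hUb (hGcont.mono hUcl).neg (fun z hz => (hL z hz).neg) (c := 0)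
      (by
        intro z hz
        rcases hfr z hz with h | h
        · simp [hGbdry z h]
        · simp [hGzero z h]) z hz
    simpa using this
  -- G is not locally constant
  have hnc : ¬ ∀ᶠ z in 𝓝 z0, G z = G z0 := by
    intro hev
    set W := connectedComponentIn U z0 with hW
    have hWo : IsOpen W := hUo.connectedComponentIn
    have hWU : W ⊆ U := connectedComponentIn_subset _ _
    have hz0W : z0 ∈ W := mem_connectedComponentIn hz0
    have hGW : EqOn G (fun _ => G z0) W := by
      apply AnalyticOnNhd.eqOn_of_preconnected_of_eventuallyEq
        (fun z hz => HarmonicAt.analyticAt (hH z (hWU hz))) analyticOnNhd_const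
        isPreconnected_connectedComponentIn hz0W hev
    have hGWc : ∀ z ∈ closure W, G z = G z0 := by
      have : EqOn G (fun _ => G z0) (closure W) :=
        hGW.of_subset_closure (hGcont.mono ((closure_mono hWU).trans hUcl)) continuousOn_const
          subset_closure subset_rfl
      exact this
    have hWfr : ∀ z ∈ frontier W, z ∈ frontier Ω ∨ z ∈ E := by
      intro z hz
      have hzU : z ∉ U := fun h => by
        have h2 := hz.2
        rw [hWo.interior_eq] at h2
        exact h2 (mem_component_of_closure hz0 hz.1 h)
      rcases hcl z (hUcl (closure_mono hWU hz.1)) with h | h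
      · right
        by_contra hE
        exact hzU ⟨h, hE⟩
      · exact Or.inl h
    by_cases hc0 : G z0 = 0
    · have him : ∀ z ∈ frontier W, z.im = 0 := by
        intro z hz
        rcases hWfr z hz with h | h
        · have := hGWc z hz.1
          rw [hGbdry z h, hc0] at this
          norm_num at this
        · exact hEreal z h
      have hIm : ∀ z : ℂ, LocRe (fun w => w.im) z := fun z =>
        ⟨fun w => -I * w, by fun_prop, by simp⟩
      have h1 := weak_max (u := fun w => w.im) hWo (hUb.subset hWU)
        Complex.continuous_im.continuousOn
        (fun z _ => hIm z) (c := 0) (fun z hz => (him z hz).le) z0 hz0W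
      have h2 := weak_max (u := fun w => - w.im) hWo (hUb.subset hWU)
        Complex.continuous_im.neg.continuousOn
        (fun z _ => (hIm z).neg) (c := 0) (fun z hz => by simp [him z hz]) z0 hz0W
      exact hz0im (by linarith)
    · have hfrW : ∀ z ∈ frontier W, z ∈ frontier Ω := by
        intro z hz
        rcases hWfr z hz with h | h
        · exact h
        · exact absurd ((hGWc z hz.1).symm.trans (hGzero z h)) hc0
      have hpc : IsPreconnected Ω := by
        have := hΩsc
        exact isPreconnected_iff_preconnectedSpace.2 inferInstance
      have hsub : Ω ⊆ W := by
        apply hpc.subset_left_of_subset_union hWo isClosed_closure.isOpen_compl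
          (disjoint_compl_right_iff_subset.2 subset_closure) _ ⟨z0, hz0.1, hz0W⟩
        intro z hz
        by_cases h : z ∈ W
        · exact Or.inl h
        · right
          intro hcz
          exact hfrΩ z (hfrW z ⟨hcz, by rwa [hWo.interior_eq]⟩) hz
      obtain ⟨e, he⟩ := hEne
      exact (hWU (hsub (hEsub he))).2 he
  obtain ⟨ω, α, hω, hα, hα2, harms⟩ := exists_arms (hL z0 hz0) hcrit hnc
  have harmU : ∀ u : ℂ, ∀ᶠ t : ℝ in 𝓝[>] 0, z0 + t * u ∈ U := by
    intro u
    have hc : Tendsto (fun t : ℝ => z0 + t * u) (𝓝[>] 0) (𝓝 z0) := by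
      have : ContinuousAt (fun t : ℝ => z0 + t * u) 0 := by fun_prop
      have h := this.tendsto
      simp at h
      exact h.mono_left nhdsWithin_le_nhds
    exact hc.eventually (hUo.mem_nhds hz0)
  have hall := ((harms.and (harmU ω)).and (harmU (ω * Complex.exp (α * I)))).and
    ((harmU (ω * Complex.exp ((2 * α : ℝ) * I))).and
      (harmU (ω * Complex.exp ((3 * α : ℝ) * I))))
  obtain ⟨r, hr, hall⟩ := mem_nhdsGT_iff_exists_Ioc_subset.1 hall
  replace hr : 0 < r := hr
  set c := G z0 with hc
  have hz0Ω : z0 ∈ Ω := hz0.1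
  have hc0 : 0 < c := by
    have h := hall ⟨hr, le_rfl⟩
    exact (hge0 _ h.1.2).trans_lt h.1.1.1.2.1
  have hc1 : c < 1 := by
    have h := hall ⟨hr, le_rfl⟩
    exact h.1.1.1.1.trans_le (hle1 _ h.1.1.2)
  -- the compact sublevel set
  set K : Set ℂ := {z ∈ closure Ω | G z ≤ c} with hK
  have hKc : IsCompact K := by
    have : K = closure Ω ∩ G ⁻¹' Iic c := by ext; simp [hK]
    rw [this]
    exact hΩbdd.isCompact_closure.of_isClosed_subset
      (hGcont.preimage_isClosed_of_isClosed isClosed_closure isClosed_Iic) inter_subset_left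
  have hKΩ : K ⊆ Ω := by
    intro z hz
    rcases hcl z hz.1 with h | h
    · exact h
    · have := hz.2
      rw [hGbdry z h] at this
      linarith
  have hGΩ : ContinuousOn G Ω := hGcont.mono subset_closure
  have hup : IsOpen (Ω ∩ G ⁻¹' Ioi c) := hGΩ.isOpen_inter_preimage hΩopen isOpen_Ioi
  have hdn : IsOpen (Ω ∩ G ⁻¹' Iio c) := hGΩ.isOpen_inter_preimage hΩopen isOpen_Iio
  have hlog : ∀ p ∈ Ω, c < G p →
      ∃ l : ℂ → ℂ, ContinuousOn l K ∧ ∀ z ∈ K, Complex.exp (l z) = z - p := by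
    intro p hp hpc
    set V := connectedComponentIn (Ω ∩ G ⁻¹' Ioi c) p with hV
    have hpV : p ∈ V := mem_connectedComponentIn ⟨hp, hpc⟩
    have hVo : IsOpen V := hup.connectedComponentIn
    have hVs : V ⊆ Ω ∩ G ⁻¹' Ioi c := connectedComponentIn_subset _ _
    have hVU : V ⊆ U := fun z hz => ⟨(hVs hz).1, fun hE => by
      have h2 : c < G z := (hVs hz).2
      rw [hGzero z hE] at h2
      linarith⟩
    have hex : ∃ p' ∈ closure V, p' ∈ frontier Ω := by
      by_contra! hno
      have := weak_max hVo (hUb.subset hVU) (hGcont.mono ((closure_mono hVU).trans hUcl))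
        (fun z hz => hL z (hVU hz)) (c := c) (by
          intro z hz
          rcases hcl z (hUcl (closure_mono hVU hz.1)) with h | h
          · by_contra! hlt
            have h2 := hz.2
            rw [hVo.interior_eq] at h2
            exact h2 (mem_component_of_closure ⟨hp, hpc⟩ hz.1 ⟨h, hlt⟩)
          · exact absurd h (hno z hz.1)) p hpV
      linarith
    obtain ⟨p', hp'V, hp'⟩ := hex
    have hp'Ω := hfrΩ p' hp'
    apply log_transfer hKc isPreconnected_connectedComponentIn
      (disjoint_left.2 fun z hz hzK => not_lt.2 hzK.2 (hVs hz).2) hpV hp'V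
      (fun h => hp'Ω (hKΩ h))
    obtain ⟨l, hl, hle⟩ := Complex.exists_continuousOn_eqOn_exp_comp (U := Ω) hΩsc hΩopen
      (g := fun z => z - p') (by fun_prop) (by
        rintro ⟨z, hz, h⟩
        exact hp'Ω (by rwa [← sub_eq_zero.1 h]))
    exact ⟨l, hl.mono hKΩ, fun z hz => hle (hKΩ hz)⟩
  have hlow : ∀ p ∈ Ω, G p < c → ∃ e ∈ E, JoinedIn (Ω ∩ G ⁻¹' Iio c) p e := by
    intro p hp hpc
    set V := connectedComponentIn (Ω ∩ G ⁻¹' Iio c) p with hV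
    have hpV : p ∈ V := mem_connectedComponentIn ⟨hp, hpc⟩
    have hVo : IsOpen V := hdn.connectedComponentIn
    have hVs : V ⊆ Ω ∩ G ⁻¹' Iio c := connectedComponentIn_subset _ _
    have hex : ∃ e ∈ E, e ∈ V := by
      by_contra! hno
      have hVU : V ⊆ U := fun z hz => ⟨(hVs hz).1, fun hE => hno z hE hz⟩
      have := weak_max hVo (hUb.subset hVU) (hGcont.mono ((closure_mono hVU).trans hUcl)).neg
        (fun z hz => (hL z (hVU hz)).neg) (c := -c) (by
          intro z hz
          simp only [Pi.neg_apply, neg_le_neg_iff]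
          rcases hcl z (hUcl (closure_mono hVU hz.1)) with h | h
          · by_contra! hlt
            have h2 := hz.2
            rw [hVo.interior_eq] at h2
            exact h2 (mem_component_of_closure ⟨hp, hpc⟩ hz.1 ⟨h, hlt⟩)
          · rw [hGbdry z h]; exact hc1.le) p hpV
      have := neg_le_neg_iff.1 this
      linarith
    obtain ⟨e, he, heV⟩ := hex
    have hcon : IsConnected V := ⟨⟨p, hpV⟩, isPreconnected_connectedComponentIn⟩
    exact ⟨e, he, ((hVo.isConnected_iff_isPathConnected.1 hcon).joinedIn p hpV e heV).mono hVs⟩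
  have hlowK : Ω ∩ G ⁻¹' Iio c ⊆ K := fun z hz => ⟨subset_closure hz.1, le_of_lt hz.2⟩
  have hlowconj : ∀ z ∈ Ω ∩ G ⁻¹' Iio c, (starRingEnd ℂ) z ∈ Ω ∩ G ⁻¹' Iio c := by
    rintro z ⟨h1, h2⟩
    refine ⟨hconj z h1, ?_⟩
    rw [mem_preimage, hsym z h1]; exact h2
  have hz0low : z0 ∉ Ω ∩ G ⁻¹' Iio c := fun h => lt_irrefl _ (show c < c from h.2)
  have hz0K : z0 ∈ K := ⟨subset_closure hz0Ω, le_rfl⟩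
  have hz0conj : (starRingEnd ℂ) z0 ≠ z0 := fun h => hz0im (Complex.conj_eq_iff_im.1 h)
  have hpiece : ∀ u : ℂ, (∀ t ∈ Ioc 0 r, z0 + (t : ℂ) * u ∈ Ω ∩ G ⁻¹' Iio c) →
      (∀ t ∈ Icc 0 r, z0 + (t : ℂ) * u ∈ K) ∧
      ∃ P : Set ℂ, IsCompact P ∧ IsPreconnected P ∧ P ⊆ K ∧ z0 ∉ P ∧ z0 + (r : ℂ) * u ∈ P ∧
        (starRingEnd ℂ) z0 ∈ P := by
    intro u hu
    have hIcc : ∀ t ∈ Icc 0 r, z0 + (t : ℂ) * u = z0 ∨ z0 + (t : ℂ) * u ∈ Ω ∩ G ⁻¹' Iio c := by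
      intro t ht
      rcases ht.1.eq_or_lt with h | h
      · left; simp [← h]
      · exact Or.inr (hu t ⟨h, ht.2⟩)
    refine ⟨fun t ht => ?_, ?_⟩
    · rcases hIcc t ht with h | h
      · rw [h]; exact hz0K
      · exact hlowK h
    have hru := hu r ⟨hr, le_rfl⟩
    obtain ⟨e, he, hj⟩ := hlow _ hru.1 hru.2
    obtain ⟨γ, hγ⟩ := hj
    set N := range γ
    have hNc : IsCompact N := isCompact_range γ.continuous
    have hNp : IsPreconnected N := isPreconnected_range γ.continuous
    have hN1 : z0 + (r : ℂ) * u ∈ N := ⟨0, γ.source⟩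
    have hN2 : e ∈ N := ⟨1, γ.target⟩
    have hNlow : N ⊆ Ω ∩ G ⁻¹' Iio c := by rintro _ ⟨t, rfl⟩; exact hγ t
    set S := (fun t : ℝ => (starRingEnd ℂ) (z0 + t * u)) '' Icc 0 r
    have hScont : Continuous (fun t : ℝ => (starRingEnd ℂ) (z0 + t * u)) :=
      Complex.continuous_conj.comp (by fun_prop)
    have hSc : IsCompact S := isCompact_Icc.image hScont
    have hSp : IsPreconnected S := isPreconnected_Icc.image _ hScont.continuousOn
    have hcN : IsPreconnected ((starRingEnd ℂ) '' N) :=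
      hNp.image _ Complex.continuous_conj.continuousOn
    refine ⟨(N ∪ (starRingEnd ℂ) '' N) ∪ S, ?_, ?_, ?_, ?_, ?_, ?_⟩
    · exact (hNc.union (hNc.image Complex.continuous_conj)).union hSc
    · apply IsPreconnected.union ((starRingEnd ℂ) (z0 + r * u)) _ _ _ hSp
      · exact Or.inr ⟨_, hN1, rfl⟩
      · exact ⟨r, ⟨hr.le, le_rfl⟩, rfl⟩
      · exact IsPreconnected.union e hN2 ⟨e, hN2, hconjE e he⟩ hNp hcN
    · rintro z ((h | ⟨w, hw, rfl⟩) | ⟨t, ht, rfl⟩)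
      · exact hlowK (hNlow h)
      · exact hlowK (hlowconj w (hNlow hw))
      · rcases hIcc t ht with h | h
        · simp only [h]
          exact ⟨hconjcl z0 hz0K.1, (hsym z0 hz0Ω).le⟩
        · exact hlowK (hlowconj _ h)
    · rintro ((h | ⟨w, hw, h⟩) | ⟨t, ht, h⟩)
      · exact hz0low (hNlow h)
      · exact hz0low (h ▸ hlowconj w (hNlow hw))
      · rcases hIcc t ht with h' | h'
        · simp only [h'] at h
          exact hz0conj h
        · exact hz0low (h ▸ hlowconj _ h')
    · exact Or.inl (Or.inl hN1)
    · exact Or.inr ⟨0, ⟨le_rfl, hr.le⟩, by simp⟩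
  obtain ⟨ha1, P1, hP1c, hP1p, hP1K, hP1z, hP1a, hP1b⟩ := hpiece (ω * Complex.exp (α * I))
    (fun t ht => ⟨(hall ht).1.2.1, (hall ht).1.1.1.2.1⟩)
  obtain ⟨ha3, P3, hP3c, hP3p, hP3K, hP3z, hP3a, hP3b⟩ :=
    hpiece (ω * Complex.exp ((3 * α : ℝ) * I))
    (fun t ht => ⟨(hall ht).2.2.1, (hall ht).1.1.1.2.2.2⟩)
  have hMc : IsClosed (P1 ∪ P3) := (hP1c.union hP3c).isClosed
  obtain ⟨ε, hε, hball⟩ := Metric.isOpen_iff.1 hMc.isOpen_compl z0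
    (fun h => h.elim hP1z hP3z)
  set ρ := min (ε / 2) r
  have hρ : 0 < ρ := lt_min (by linarith) hr
  have hρr : ρ ≤ r := min_le_right _ _
  have hρε : ρ < ε := (min_le_left _ _).trans_lt (by linarith)
  have hMρ : ∀ z ∈ P1 ∪ P3, ρ < ‖z - z0‖ := by
    intro z hz
    by_contra! hle
    exact hball (by rw [mem_ball, dist_eq_norm]; linarith) hz
  have hρall := hall ⟨hρ, hρr⟩
  exact no_cross hω hα hα2 hr hρ (IsPreconnected.union _ hP1b hP3b hP1p hP3p)
    (union_subset hP1K hP3K) hMρ ha1 ha3 (Or.inl hP1a) (Or.inr hP3a)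
    (hlog _ hρall.1.1.2.1 hρall.1.1.1.1) (hlog _ hρall.2.1.1 hρall.1.1.1.2.2.1)
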